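/- arXiv:2512.00576 — 4 statements merged into one kernel-verified Lean document; each statement's English description precedes it below -/
import Mathlib

section
/- Let m, s, t be natural numbers and z ∈ ℂ. Then (1/(π·m!)) · ∫_ℂ w^s · conj(w)^t · K_m(z, w) · |w|^{2m} · e^{-|w|²} dA(w) equals ((s+m)!/(s+m−t)!) · z^{s−t} if t ≤ s, and equals 0 if s < t. -/
open MeasureTheory Complex ComplexOrder

/-!
Expanding the kernel as a power series in `conj w`, the integral becomes a sum of the moments
`∫ w ^ s * conj w ^ (t + j) * |w| ^ (2m) * exp (-|w|²)`. A rotation of the plane shows that the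
moment vanishes unless `s = t + j`, and for `s = t + j` it is the Gamma integral `π * (s + m)!`
(`fs_moment`). So at most the index `j = s - t` contributes.

Exchanging sum and integral is dominated convergence: since `m! / (j + m)! ≤ 1 / j!`, the terms are
dominated by those of the series of `exp (|z| |w|) * |w| ^ N * exp (-|w|²)`, and
`|z| |w| ≤ |z|² / 2 + |w|² / 2` makes this sum integrable.
-/

/-- Weight function: `|z|^{2m} e^{-|z|^2}` as a complex number. -/
noncomputable def fsWt (m : ℕ) (z : ℂ) : ℂ :=
  ((‖z‖ : ℝ) : ℂ) ^ (2 * m) * ((Real.exp (-‖z‖ ^ 2) : ℝ) : ℂ)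

/-- Fock–Sobolev reproducing kernel `K_m(z,w)`. -/
noncomputable def fsKernel (m : ℕ) (z w : ℂ) : ℂ :=
  ∑' j : ℕ, ((m.factorial : ℂ) / ((j + m).factorial : ℂ)) * (z * starRingEnd ℂ w) ^ j

/-- Toeplitz operator with symbol `ψ` acting on `f`, evaluated at `z`. -/
noncomputable def fsToeplitz (m : ℕ) (ψ f : ℂ → ℂ) (z : ℂ) : ℂ :=
  (1 / ((Real.pi : ℂ) * (m.factorial : ℂ))) *
    ∫ w : ℂ, ψ w * f w * fsKernel m z w * fsWt m w

/-- Fock–Sobolev pairing `⟨g, h⟩`. -/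
noncomputable def fsPair (m : ℕ) (g h : ℂ → ℂ) : ℂ :=
  ∫ z : ℂ, g z * starRingEnd ℂ (h z) * fsWt m z

/-- `‖g‖² = ⟨g, g⟩`. -/
noncomputable def fsNormSq (m : ℕ) (g : ℂ → ℂ) : ℂ := fsPair m g g

lemma fs_gauss_integral (n : ℕ) {b : ℝ} (hb : 0 < b) :
    ∫ w : ℂ, ‖w‖ ^ n * Real.exp (-b * ‖w‖ ^ 2) =
      Real.pi * b ^ (-((n : ℝ) + 2) / 2) * Real.Gamma (((n : ℝ) + 2) / 2) := by
  have h := Complex.integral_rpow_mul_exp_neg_mul_rpow (p := 2) (q := n) (b := b) (by norm_num)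
    (by have : (0 : ℝ) ≤ n := n.cast_nonneg
        linarith) hb
  simp only [Real.rpow_natCast, Real.rpow_ofNat] at h
  rw [h]
  ring

lemma fs_gauss_integrable (n : ℕ) {b : ℝ} (hb : 0 < b) :
    Integrable (fun w : ℂ => ‖w‖ ^ n * Real.exp (-b * ‖w‖ ^ 2)) := by
  -- The Bochner integral of a non-integrable function is `0`, while this one is positive.
  by_contra h
  have h0 := fs_gauss_integral n hb
  rw [integral_undef h] at h0
  have : 0 < Real.Gamma (((n : ℝ) + 2) / 2) := Real.Gamma_pos_of_pos (by positivity)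
  have : 0 < Real.pi * b ^ (-((n : ℝ) + 2) / 2) * Real.Gamma (((n : ℝ) + 2) / 2) := by positivity
  linarith

lemma fs_wt_eq (m : ℕ) (w : ℂ) :
    fsWt m w = ((‖w‖ ^ (2 * m) * Real.exp (-1 * ‖w‖ ^ 2) : ℝ) : ℂ) := by
  simp [fsWt]

/-- The monomials are orthogonal for the weight, by rotation invariance of area. -/
lemma fs_moment_ne (m s k : ℕ) (hsk : s ≠ k) :
    ∫ w : ℂ, w ^ s * (starRingEnd ℂ w) ^ k * fsWt m w = 0 := by
  -- Rotation by the angle `π / (s - k)` changes the sign of the integrand.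
  set θ : ℝ := Real.pi / ((s : ℝ) - k) with hθ
  have hne : (s : ℝ) - k ≠ 0 := sub_ne_zero.mpr (by exact_mod_cast hsk)
  have hu : ((Circle.exp θ : Circle) : ℂ) ^ s
      * (starRingEnd ℂ ((Circle.exp θ : Circle) : ℂ)) ^ k = -1 := by
    rw [Circle.coe_exp, ← Complex.exp_conj, ← Complex.exp_nat_mul, ← Complex.exp_nat_mul,
      ← Complex.exp_add, ← Complex.exp_pi_mul_I]
    congr 1
    have hπ : (Real.pi : ℂ) = θ * ((s : ℂ) - k) := by
      have : Real.pi = θ * ((s : ℝ) - k) := by rw [hθ]; field_simp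
      exact_mod_cast congrArg (fun x : ℝ => (x : ℂ)) this
    rw [hπ]
    simp
    ring
  have hrot := (LinearIsometryEquiv.measurePreserving (rotation (Circle.exp θ))).integral_comp
    (rotation (Circle.exp θ)).toHomeomorph.measurableEmbedding
    (fun w : ℂ => w ^ s * (starRingEnd ℂ w) ^ k * fsWt m w)
  have hneg : ∀ w : ℂ, (rotation (Circle.exp θ) w) ^ s
      * (starRingEnd ℂ (rotation (Circle.exp θ) w)) ^ k * fsWt m (rotation (Circle.exp θ) w)
      = -(w ^ s * (starRingEnd ℂ w) ^ k * fsWt m w) := by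
    intro w
    have hw : fsWt m (rotation (Circle.exp θ) w) = fsWt m w := by
      simp only [fsWt, LinearIsometryEquiv.norm_map]
    rw [hw, rotation_apply, map_mul, mul_pow, mul_pow]
    linear_combination (w ^ s * (starRingEnd ℂ w) ^ k * fsWt m w) * hu
  simp only [hneg, integral_neg] at hrot
  exact self_eq_neg.mp hrot.symm

lemma fs_moment (m s k : ℕ) :
    ∫ w : ℂ, w ^ s * (starRingEnd ℂ w) ^ k * fsWt m w =
      if s = k then (Real.pi : ℂ) * ((s + m).factorial : ℂ) else 0 := by
  split_ifs with h
  · subst h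
    have h1 : ∀ w : ℂ, w ^ s * (starRingEnd ℂ w) ^ s * fsWt m w =
        ((‖w‖ ^ (2 * (s + m)) * Real.exp (-1 * ‖w‖ ^ 2) : ℝ) : ℂ) := by
      intro w
      rw [← mul_pow, Complex.mul_conj, Complex.normSq_eq_norm_sq, fs_wt_eq]
      push_cast
      ring
    simp only [h1]
    rw [integral_complex_ofReal, fs_gauss_integral _ one_pos]
    have h2 : (((2 * (s + m) : ℕ) : ℝ) + 2) / 2 = ((s + m : ℕ) : ℝ) + 1 := by
      push_cast
      ring
    rw [h2, Real.Gamma_nat_eq_factorial]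
    simp
  · exact fs_moment_ne m s k h

lemma fs_coeff_le (m j : ℕ) :
    (m.factorial : ℝ) / ((j + m).factorial : ℝ) ≤ 1 / (j.factorial : ℝ) := by
  rw [div_le_div_iff₀ (by positivity) (by positivity), one_mul, mul_comm]
  exact_mod_cast Nat.le_of_dvd (Nat.factorial_pos _)
    (Nat.factorial_mul_factorial_dvd_factorial_add j m)

lemma fs_hasSum_kernel (m : ℕ) (z w : ℂ) :
    HasSum (fun j : ℕ => ((m.factorial : ℂ) / ((j + m).factorial : ℂ))
      * (z * starRingEnd ℂ w) ^ j) (fsKernel m z w) := by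
  refine Summable.hasSum (Summable.of_norm_bounded
    (NormedSpace.expSeries_div_summable (𝔸 := ℝ) (‖z‖ * ‖w‖)) fun j => ?_)
  rw [norm_mul, norm_div, norm_pow, norm_mul, RCLike.norm_conj, Complex.norm_natCast,
    Complex.norm_natCast, div_eq_mul_one_div ((‖z‖ * ‖w‖) ^ j), mul_comm]
  exact mul_le_mul_of_nonneg_left (fs_coeff_le m j) (by positivity)

/-- The kernel series may be integrated term by term against `w ^ s * conj w ^ t` and the weight. -/
lemma fs_hasSum_integral (m s t : ℕ) (z : ℂ) :
    HasSum (fun j : ℕ => ∫ w : ℂ, ((m.factorial : ℂ) / ((j + m).factorial : ℂ) * z ^ j)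
        * (w ^ s * (starRingEnd ℂ w) ^ (t + j) * fsWt m w))
      (∫ w : ℂ, w ^ s * (starRingEnd ℂ w) ^ t * fsKernel m z w * fsWt m w) := by
  have hexp : ∀ w : ℂ, HasSum (fun j : ℕ => (‖z‖ * ‖w‖) ^ j / (j.factorial : ℝ)
      * (‖w‖ ^ (s + t + 2 * m) * Real.exp (-1 * ‖w‖ ^ 2)))
      (Real.exp (‖z‖ * ‖w‖) * (‖w‖ ^ (s + t + 2 * m) * Real.exp (-1 * ‖w‖ ^ 2))) := by
    intro w
    rw [Real.exp_eq_exp_ℝ]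
    exact (NormedSpace.expSeries_div_hasSum_exp (𝔸 := ℝ) (‖z‖ * ‖w‖)).mul_right _
  refine hasSum_integral_of_dominated_convergence
    (fun j w => (‖z‖ * ‖w‖) ^ j / (j.factorial : ℝ)
      * (‖w‖ ^ (s + t + 2 * m) * Real.exp (-1 * ‖w‖ ^ 2))) ?_ ?_ ?_ ?_ ?_
  · intro j
    apply Continuous.aestronglyMeasurable
    unfold fsWt
    fun_prop
  · intro j
    refine Filter.Eventually.of_forall fun w => ?_
    rw [fs_wt_eq]
    simp only [norm_mul, norm_div, norm_pow, RCLike.norm_conj, Complex.norm_natCast,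
      Complex.norm_real, Real.norm_eq_abs, Real.abs_exp]
    calc _ = (m.factorial : ℝ) / ((j + m).factorial : ℝ) * ((‖z‖ * ‖w‖) ^ j
          * (‖w‖ ^ (s + t + 2 * m) * Real.exp (-1 * ‖w‖ ^ 2))) := by
          simp only [abs_norm]
          ring
      _ ≤ 1 / (j.factorial : ℝ) * ((‖z‖ * ‖w‖) ^ j
          * (‖w‖ ^ (s + t + 2 * m) * Real.exp (-1 * ‖w‖ ^ 2))) :=
          mul_le_mul_of_nonneg_right (fs_coeff_le m j) (by positivity)
      _ = _ := by ring
  · exact Filter.Eventually.of_forall fun w => (hexp w).summable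
  · simp only [fun w => (hexp w).tsum_eq]
    refine Integrable.mono' ((fs_gauss_integrable (s + t + 2 * m) (b := 1 / 2)
      (by norm_num)).const_mul (Real.exp (‖z‖ ^ 2 / 2))) ?_ ?_
    · apply Continuous.aestronglyMeasurable
      fun_prop
    · refine Filter.Eventually.of_forall fun w => ?_
      rw [Real.norm_of_nonneg (by positivity)]
      have h : Real.exp (‖z‖ * ‖w‖) * Real.exp (-1 * ‖w‖ ^ 2)
          ≤ Real.exp (‖z‖ ^ 2 / 2) * Real.exp (-(1 / 2) * ‖w‖ ^ 2) := by
        rw [← Real.exp_add, ← Real.exp_add, Real.exp_le_exp]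
        nlinarith [sq_nonneg (‖z‖ - ‖w‖)]
      have h' := mul_le_mul_of_nonneg_left h (by positivity : 0 ≤ ‖w‖ ^ (s + t + 2 * m))
      linarith
  · refine Filter.Eventually.of_forall fun w => ?_
    have h := ((fs_hasSum_kernel m z w).mul_left (w ^ s * (starRingEnd ℂ w) ^ t)).mul_right
      (fsWt m w)
    have hterm : ∀ j : ℕ, ((m.factorial : ℂ) / ((j + m).factorial : ℂ) * z ^ j)
        * (w ^ s * (starRingEnd ℂ w) ^ (t + j) * fsWt m w) = w ^ s * (starRingEnd ℂ w) ^ t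
        * (((m.factorial : ℂ) / ((j + m).factorial : ℂ)) * (z * starRingEnd ℂ w) ^ j)
        * fsWt m w := fun j => by ring
    simpa only [hterm] using h

theorem stmt1 (m s t : ℕ) (z : ℂ) :
    (1 / ((Real.pi : ℂ) * (m.factorial : ℂ))) *
        (∫ w : ℂ, w ^ s * (starRingEnd ℂ w) ^ t * fsKernel m z w * fsWt m w) =
      if t ≤ s then (((s + m).factorial : ℂ) / ((s + m - t).factorial : ℂ)) * z ^ (s - t)
      else 0 := by
  rw [← (fs_hasSum_integral m s t z).tsum_eq]
  simp only [integral_const_mul, fs_moment]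
  split_ifs with h
  · rw [tsum_eq_single (s - t) fun j hj => by rw [if_neg (by omega), mul_zero],
      if_pos (by omega), show s - t + m = s + m - t by omega]
    have h1 : (Real.pi : ℂ) ≠ 0 := by exact_mod_cast Real.pi_ne_zero
    have h2 : (m.factorial : ℂ) ≠ 0 := by exact_mod_cast m.factorial_ne_zero
    field_simp
  · have h0 : ∀ j, s ≠ t + j := fun j => by omega
    simp [h0]
end

section
/- Let m, p, n, s, t, k be natural numbers with n ≤ p, s ≤ t and k > max(p, t), let a, b ∈ ℂ, and let φ(z) = a·z^p·conj(z)^n + b·z^s·conj(z)^t. Then for every z ∈ ℂ, (T_{conj∘φ} (w ↦ w^k))(z) = conj(a)·((n+k+m)!/(n+k+m−p)!)·z^{n+k−p} + conj(b)·((t+k+m)!/(t+k+m−s)!)·z^{t+k−s}. -/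
/-!
The integrand is expanded along the power series of the kernel. The series of norms is dominated by
`(polynomial in ‖w‖) * exp (‖z‖ * ‖w‖ - ‖w‖ ^ 2)`, which is integrable
(`integrable_pow_exp`), so sum and integral may be exchanged. The resulting moments
`∫ w ^ c * conj w ^ d * fsWt m w` vanish for `c ≠ d` by invariance under rotation
(`fsMoment_ne`) and equal `π * (c + m)!` for `c = d` (`fsMoment_eq`). Hence each of the two
monomials of the conjugated symbol picks out exactly one term of the series: `j = n + k - p` for
the first one, `j = t + k - s` for the second one.
-/

open MeasureTheory Complex ComplexOrder

lemma integrable_pow_exp (N : ℕ) (A : ℝ) :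
    Integrable (fun w : ℂ => ‖w‖ ^ N * Real.exp (A * ‖w‖) * Real.exp (-‖w‖ ^ 2)) := by
  have h0 : Integrable (fun w : ℂ => Real.exp (-(1 / 2) * ‖w‖ ^ 2)) := by
    have h := (GaussianFourier.integrable_cexp_neg_mul_sq_norm_add (V := ℂ) (b := (1 / 2 : ℂ))
      (by norm_num) 0 0).norm
    refine h.congr (Filter.Eventually.of_forall fun w => ?_)
    simp only [Complex.norm_exp]
    congr 1
    norm_num [← Complex.ofReal_pow]
  refine (h0.const_mul (N.factorial * Real.exp ((A + 1) ^ 2 / 2))).mono'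
    (by fun_prop) (Filter.Eventually.of_forall fun w => ?_)
  rw [Real.norm_of_nonneg (by positivity)]
  have h1 : ‖w‖ ^ N ≤ N.factorial * Real.exp ‖w‖ := by
    have := Real.pow_div_factorial_le_exp ‖w‖ (norm_nonneg w) N
    rw [div_le_iff₀ (by positivity)] at this
    linarith
  calc ‖w‖ ^ N * Real.exp (A * ‖w‖) * Real.exp (-‖w‖ ^ 2)
      ≤ N.factorial * Real.exp ‖w‖ * Real.exp (A * ‖w‖) * Real.exp (-‖w‖ ^ 2) := by gcongr
    _ = N.factorial * Real.exp (‖w‖ + A * ‖w‖ + -‖w‖ ^ 2) := by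
        rw [Real.exp_add, Real.exp_add]; ring
    _ ≤ N.factorial * Real.exp ((A + 1) ^ 2 / 2 + -(1 / 2) * ‖w‖ ^ 2) := by
        refine mul_le_mul_of_nonneg_left (Real.exp_le_exp.mpr ?_) (by positivity)
        nlinarith [sq_nonneg (‖w‖ - (A + 1))]
    _ = _ := by rw [Real.exp_add]; ring

lemma norm_fsWt (m : ℕ) (w : ℂ) : ‖fsWt m w‖ = ‖w‖ ^ (2 * m) * Real.exp (-‖w‖ ^ 2) := by
  simp only [fsWt, norm_mul, norm_pow, Complex.norm_real, Real.norm_eq_abs,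
    Real.abs_exp, abs_norm]

lemma continuous_fsWt (m : ℕ) : Continuous (fsWt m) := by
  unfold fsWt
  fun_prop

lemma continuous_fsMoment (m c d : ℕ) :
    Continuous (fun w : ℂ => w ^ c * starRingEnd ℂ w ^ d * fsWt m w) := by
  have := continuous_fsWt m
  have := Complex.continuous_conj
  fun_prop

lemma integrable_fsMoment (m c d : ℕ) :
    Integrable (fun w : ℂ => w ^ c * starRingEnd ℂ w ^ d * fsWt m w) := by
  refine (integrable_pow_exp (c + d + 2 * m) 0).mono'
    (continuous_fsMoment m c d).aestronglyMeasurable (Filter.Eventually.of_forall fun w => ?_)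
  rw [norm_mul, norm_mul, norm_fsWt, norm_pow, norm_pow, RCLike.norm_conj]
  simp only [zero_mul, Real.exp_zero]
  exact le_of_eq (by ring)

lemma fsMoment_eq (m c : ℕ) :
    ∫ w : ℂ, w ^ c * starRingEnd ℂ w ^ c * fsWt m w = Real.pi * (c + m).factorial := by
  have h := Complex.integral_rpow_mul_exp_neg_rpow (p := 2) (q := ((2 * (c + m) : ℕ) : ℝ))
    (by norm_num) (by have : (0 : ℝ) ≤ ((2 * (c + m) : ℕ) : ℝ) := by positivity
                      linarith)
  have h2 : (((2 * (c + m) : ℕ) : ℝ) + 2) / 2 = ((c + m : ℕ) : ℝ) + 1 := by push_cast; ring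
  rw [h2, Real.Gamma_nat_eq_factorial] at h
  have h3 : ∀ w : ℂ, w ^ c * starRingEnd ℂ w ^ c * fsWt m w =
      ((‖w‖ ^ ((2 * (c + m) : ℕ) : ℝ) * Real.exp (-‖w‖ ^ (2 : ℝ)) : ℝ) : ℂ) := by
    intro w
    rw [← mul_pow, Complex.mul_conj', fsWt, Real.rpow_natCast, Real.rpow_two]
    push_cast
    ring
  simp_rw [h3]
  rw [integral_complex_ofReal, h]
  push_cast
  ring

/-- The substitution `w ↦ u * w` with `u = exp (iπ / (c - d))` flips the sign of the integrand. -/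
lemma fsMoment_ne (m c d : ℕ) (hcd : c ≠ d) :
    ∫ w : ℂ, w ^ c * starRingEnd ℂ w ^ d * fsWt m w = 0 := by
  set θ : ℝ := Real.pi / ((c : ℝ) - d) with hθ
  have hne : (c : ℝ) - d ≠ 0 := sub_ne_zero.mpr (by exact_mod_cast hcd)
  have hu : (Circle.exp θ : ℂ) ^ c * starRingEnd ℂ (Circle.exp θ : ℂ) ^ d = -1 := by
    rw [Circle.coe_exp, ← Complex.exp_conj, ← Complex.exp_nat_mul, ← Complex.exp_nat_mul,
      ← Complex.exp_add, ← Complex.exp_pi_mul_I]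
    congr 1
    have : (θ : ℂ) * ((c : ℂ) - d) = Real.pi := by
      have h : θ * ((c : ℝ) - d) = Real.pi := div_mul_cancel₀ Real.pi hne
      exact_mod_cast congrArg ((↑) : ℝ → ℂ) h
    rw [map_mul, Complex.conj_ofReal, Complex.conj_I, ← this]
    ring
  have h := (rotation (Circle.exp θ)).measurePreserving.integral_comp
    (rotation (Circle.exp θ)).toHomeomorph.measurableEmbedding
    (fun w : ℂ => w ^ c * starRingEnd ℂ w ^ d * fsWt m w)
  have h2 : ∀ w : ℂ, (rotation (Circle.exp θ) w) ^ c *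
      starRingEnd ℂ (rotation (Circle.exp θ) w) ^ d * fsWt m (rotation (Circle.exp θ) w) =
      -(w ^ c * starRingEnd ℂ w ^ d * fsWt m w) := by
    intro w
    have hw : fsWt m (rotation (Circle.exp θ) w) = fsWt m w := by
      simp only [fsWt, LinearIsometryEquiv.norm_map]
    rw [hw, rotation_apply, map_mul, mul_pow, mul_pow]
    linear_combination (w ^ c * starRingEnd ℂ w ^ d * fsWt m w) * hu
  simp_rw [h2] at h
  rw [integral_neg] at h
  linear_combination (-1 / 2 : ℂ) * h

lemma factorial_ratio_le (m j : ℕ) :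
    (m.factorial : ℝ) / (j + m).factorial ≤ 1 / j.factorial := by
  rw [div_le_div_iff₀ (by positivity) (by positivity), one_mul, mul_comm]
  exact_mod_cast Nat.le_of_dvd (Nat.factorial_pos _)
    (Nat.factorial_mul_factorial_dvd_factorial_add j m)

/-- Only the index `j = c - d` contributes to the integrated kernel series. -/
lemma hasSum_fsMoment (m c d : ℕ) (hdc : d ≤ c) (z : ℂ) :
    HasSum (fun j : ℕ => ((m.factorial : ℂ) / ((j + m).factorial : ℂ)) * z ^ j *
        ∫ w : ℂ, w ^ c * starRingEnd ℂ w ^ (d + j) * fsWt m w)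
      (Real.pi * m.factorial * (((c + m).factorial : ℂ) / ((c + m - d).factorial : ℂ)) *
        z ^ (c - d)) := by
  have h := hasSum_single (f := fun j : ℕ => ((m.factorial : ℂ) / ((j + m).factorial : ℂ)) *
    z ^ j * ∫ w : ℂ, w ^ c * starRingEnd ℂ w ^ (d + j) * fsWt m w) (c - d) (fun j hj => by
      rw [fsMoment_ne m c (d + j) (by omega), mul_zero])
  convert h using 1
  rw [Nat.add_sub_cancel' hdc, fsMoment_eq, show c - d + m = c + m - d by omega]
  ring

/-- Termwise integration of the kernel series against a combination of two monomials. -/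
lemma integral_kernel (m c d c₂ d₂ : ℕ) (hdc : d ≤ c) (hdc₂ : d₂ ≤ c₂) (α β z : ℂ) :
    ∫ w : ℂ, (α * (w ^ c * starRingEnd ℂ w ^ d) + β * (w ^ c₂ * starRingEnd ℂ w ^ d₂)) *
        fsKernel m z w * fsWt m w =
      α * (Real.pi * m.factorial * (((c + m).factorial : ℂ) / ((c + m - d).factorial : ℂ)) *
        z ^ (c - d)) +
      β * (Real.pi * m.factorial * (((c₂ + m).factorial : ℂ) / ((c₂ + m - d₂).factorial : ℂ)) *
        z ^ (c₂ - d₂)) := by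
  set P : ℂ → ℂ := fun w => α * (w ^ c * starRingEnd ℂ w ^ d) +
    β * (w ^ c₂ * starRingEnd ℂ w ^ d₂) with hP
  set F : ℕ → ℂ → ℂ := fun j w =>
    P w * (((m.factorial : ℂ) / ((j + m).factorial : ℂ)) * (z * starRingEnd ℂ w) ^ j) * fsWt m w
    with hF
  set Q : ℂ → ℝ := fun w => (‖α‖ * ‖w‖ ^ (c + d + 2 * m) + ‖β‖ * ‖w‖ ^ (c₂ + d₂ + 2 * m)) *
    Real.exp (-‖w‖ ^ 2) with hQ
  have hPQ : ∀ w, ‖P w‖ * ‖fsWt m w‖ ≤ Q w := by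
    intro w
    have h1 : ‖P w‖ ≤ ‖α‖ * (‖w‖ ^ c * ‖w‖ ^ d) + ‖β‖ * (‖w‖ ^ c₂ * ‖w‖ ^ d₂) := by
      refine (norm_add_le _ _).trans (le_of_eq ?_)
      simp only [norm_mul, norm_pow, RCLike.norm_conj]
    rw [norm_fsWt]
    refine (mul_le_mul_of_nonneg_right h1 (by positivity)).trans (le_of_eq ?_)
    simp only [hQ]
    ring
  have hcoef : ∀ j w, ‖((m.factorial : ℂ) / ((j + m).factorial : ℂ)) *
      (z * starRingEnd ℂ w) ^ j‖ ≤ (‖z‖ * ‖w‖) ^ j / j.factorial := by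
    intro j w
    rw [norm_mul, norm_div, norm_pow, norm_mul, RCLike.norm_conj, Complex.norm_natCast,
      Complex.norm_natCast]
    refine (mul_le_mul_of_nonneg_right (factorial_ratio_le m j) (by positivity)).trans
      (le_of_eq (by ring))
  have hexp : ∀ w : ℂ, HasSum (fun j : ℕ => (‖z‖ * ‖w‖) ^ j / (j.factorial : ℝ))
      (Real.exp (‖z‖ * ‖w‖)) := by
    intro w
    rw [Real.exp_eq_exp_ℝ]
    exact NormedSpace.expSeries_div_hasSum_exp (‖z‖ * ‖w‖)
  have hFc : ∀ j, Continuous (F j) := by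
    intro j
    have := continuous_fsWt m
    have := Complex.continuous_conj
    simp only [hF, hP]
    fun_prop
  have hmain : HasSum (fun j => ∫ w, F j w) (∫ w, P w * fsKernel m z w * fsWt m w) := by
    refine hasSum_integral_of_dominated_convergence
      (fun j w => Q w * ((‖z‖ * ‖w‖) ^ j / (j.factorial : ℝ)))
      (fun j => (hFc j).aestronglyMeasurable) ?_ ?_ ?_ ?_
    · refine fun j => Filter.Eventually.of_forall fun w => ?_
      calc ‖F j w‖ = (‖P w‖ * ‖fsWt m w‖) * ‖((m.factorial : ℂ) / ((j + m).factorial : ℂ)) *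
            (z * starRingEnd ℂ w) ^ j‖ := by
            simp only [hF]
            rw [norm_mul, norm_mul]
            ring
        _ ≤ _ := mul_le_mul (hPQ w) (hcoef j w) (norm_nonneg _)
            ((by positivity : (0 : ℝ) ≤ ‖P w‖ * ‖fsWt m w‖).trans (hPQ w))
    · exact Filter.Eventually.of_forall fun w => (hexp w).summable.mul_left _
    · have hI := ((integrable_pow_exp (c + d + 2 * m) ‖z‖).const_mul ‖α‖).add
        ((integrable_pow_exp (c₂ + d₂ + 2 * m) ‖z‖).const_mul ‖β‖)
      refine hI.congr (Filter.Eventually.of_forall fun w => ?_)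
      simp only [tsum_mul_left, (hexp w).tsum_eq, hQ, Pi.add_apply]
      ring
    · refine Filter.Eventually.of_forall fun w => ?_
      have hs : Summable fun j : ℕ => ((m.factorial : ℂ) / ((j + m).factorial : ℂ)) *
          (z * starRingEnd ℂ w) ^ j :=
        Summable.of_norm_bounded (hexp w).summable (fun j => hcoef j w)
      exact (hs.hasSum.mul_left (P w)).mul_right (fsWt m w)
  have hsum := ((hasSum_fsMoment m c d hdc z).mul_left α).add
    ((hasSum_fsMoment m c₂ d₂ hdc₂ z).mul_left β)
  refine hmain.unique (hsum.congr_fun ?_)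
  intro j
  rw [← integral_const_mul, ← integral_const_mul, ← integral_const_mul, ← integral_const_mul,
    ← integral_add (((integrable_fsMoment m c (d + j)).const_mul _).const_mul _)
      (((integrable_fsMoment m c₂ (d₂ + j)).const_mul _).const_mul _)]
  refine integral_congr_ae (Filter.Eventually.of_forall fun w => ?_)
  simp only [hF, hP]
  ring

theorem stmt3 (m p n s t k : ℕ) (hn : n ≤ p) (hs : s ≤ t) (hk : k > max p t)
    (a b : ℂ) (φ : ℂ → ℂ) (hφ : φ = fun z => a * z ^ p * (starRingEnd ℂ z) ^ n + b * z ^ s * (starRingEnd ℂ z) ^ t) :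
    ∀ z : ℂ, fsToeplitz m (fun w => starRingEnd ℂ (φ w)) (fun w => w ^ k) z =
      starRingEnd ℂ a * (((n + k + m).factorial : ℂ) / ((n + k + m - p).factorial : ℂ)) *
          z ^ (n + k - p)
      + starRingEnd ℂ b * (((t + k + m).factorial : ℂ) / ((t + k + m - s).factorial : ℂ)) *
          z ^ (t + k - s) := by
  intro z
  have hp : p < k := (le_max_left p t).trans_lt hk
  have h := integral_kernel m (n + k) p (t + k) s (by omega) (by omega)
    (starRingEnd ℂ a) (starRingEnd ℂ b) z
  have hint : ∀ w : ℂ, starRingEnd ℂ (φ w) * w ^ k * fsKernel m z w * fsWt m w =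
      (starRingEnd ℂ a * (w ^ (n + k) * starRingEnd ℂ w ^ p) +
        starRingEnd ℂ b * (w ^ (t + k) * starRingEnd ℂ w ^ s)) * fsKernel m z w * fsWt m w := by
    intro w
    simp only [hφ, map_add, map_mul, map_pow, Complex.conj_conj]
    ring
  simp only [fsToeplitz, hint]
  rw [h]
  have hpi : (Real.pi : ℂ) ≠ 0 := by exact_mod_cast Real.pi_ne_zero
  have hm : (m.factorial : ℂ) ≠ 0 := by exact_mod_cast m.factorial_ne_zero
  have hc : (1 / ((Real.pi : ℂ) * m.factorial)) * (Real.pi * m.factorial) = 1 :=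
    one_div_mul_cancel (mul_ne_zero hpi hm)
  linear_combination (starRingEnd ℂ a * (((n + k + m).factorial : ℂ) /
      ((n + k + m - p).factorial : ℂ)) * z ^ (n + k - p) +
    starRingEnd ℂ b * (((t + k + m).factorial : ℂ) / ((t + k + m - s).factorial : ℂ)) *
      z ^ (t + k - s)) * hc
end

section
/- Let m, p, n, s, t, k be natural numbers with n < p, s < t, k > 2·p and k > 2·t, let a, b ∈ ℂ, and let φ(z) = a·z^p·conj(z)^n + b·z^s·conj(z)^t. Then ⟨T_φ(T_φ (w ↦ w^k)), T_φ (w ↦ w^k)⟩ = 0 and ⟨T_{conj∘φ}(T_φ (w ↦ w^k)), T_{conj∘φ} (w ↦ w^k)⟩ = 0; in particular the quasinormality test ⟨T_φ(T_φ (w ↦ w^k)), T_φ (w ↦ w^k)⟩ = ⟨T_{conj∘φ}(T_φ (w ↦ w^k)), T_{conj∘φ} (w ↦ w^k)⟩ holds at every such monomial. -/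
/-!
Write `d = p - n > 0` and `e = t - s > 0`, and let `ω` be a primitive `(d + e)`-th root of unity.
Since `ω ^ d = conj ω ^ e`, both terms of `φ` pick up the same factor under rotation by `ω`:
`φ (ω z) = ω ^ d φ z`. Rotation invariance of Lebesgue measure, of the weight and of the kernel
(`fsToeplitz_rotate`) shows that a Toeplitz operator multiplies rotation factors, and likewise
(`fsPair_rotate`) a pairing of functions with factors `α`, `β` is unchanged when multiplied by
`α * conj β`. For both pairings in the theorem this factor is `ω ^ d`, which differs from `1`
because `0 < d < d + e`; hence both pairings vanish. The argument needs no integrability, so no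
splitting of the integrals into monomial pieces.
-/

open MeasureTheory Complex ComplexOrder

lemma integral_rotate (ω : ℂ) (hω : ‖ω‖ = 1) (F : ℂ → ℂ) :
    ∫ z : ℂ, F (ω * z) = ∫ z : ℂ, F z := by
  let c : Circle := ⟨ω, by simpa [Submonoid.unitSphere] using hω⟩
  exact (rotation c).measurePreserving.integral_comp
    (rotation c).toHomeomorph.measurableEmbedding F

lemma fsWt_rotate (m : ℕ) (ω : ℂ) (hω : ‖ω‖ = 1) (z : ℂ) : fsWt m (ω * z) = fsWt m z := by
  simp [fsWt, hω]

lemma mul_conj_of_norm_one (ω : ℂ) (hω : ‖ω‖ = 1) : ω * starRingEnd ℂ ω = 1 := by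
  rw [Complex.mul_conj, Complex.normSq_eq_norm_sq, hω]
  simp

lemma fsKernel_rotate (m : ℕ) (ω : ℂ) (hω : ‖ω‖ = 1) (z w : ℂ) :
    fsKernel m (ω * z) (ω * w) = fsKernel m z w := by
  have h : ω * z * starRingEnd ℂ (ω * w) = z * starRingEnd ℂ w := by
    rw [map_mul]
    linear_combination z * starRingEnd ℂ w * mul_conj_of_norm_one ω hω
  simp only [fsKernel, h]

/-- A Toeplitz operator is equivariant under rotations: the rotation factors of the symbol and of
the argument multiply. -/
lemma fsToeplitz_rotate (m : ℕ) (ω : ℂ) (hω : ‖ω‖ = 1) {ψ f : ℂ → ℂ} {α β : ℂ}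
    (hψ : ∀ z, ψ (ω * z) = α * ψ z) (hf : ∀ z, f (ω * z) = β * f z) (z : ℂ) :
    fsToeplitz m ψ f (ω * z) = α * β * fsToeplitz m ψ f z := by
  unfold fsToeplitz
  rw [← integral_rotate ω hω, mul_left_comm, ← integral_const_mul (α * β)]
  congr 2
  funext w
  rw [hψ, hf, fsKernel_rotate m ω hω, fsWt_rotate m ω hω]
  ring

lemma fsPair_rotate (m : ℕ) (ω : ℂ) (hω : ‖ω‖ = 1) {g h : ℂ → ℂ} {α β : ℂ}
    (hg : ∀ z, g (ω * z) = α * g z) (hh : ∀ z, h (ω * z) = β * h z) :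
    fsPair m g h = α * starRingEnd ℂ β * fsPair m g h := by
  conv_lhs => unfold fsPair
  rw [← integral_rotate ω hω]
  unfold fsPair
  rw [← integral_const_mul (α * starRingEnd ℂ β)]
  congr 1
  funext w
  rw [hg, hh, fsWt_rotate m ω hω, map_mul]
  ring

theorem stmt16 (m p n s t k : ℕ) (hn : n < p) (hs : s < t)
    (hk1 : k > 2 * p) (hk2 : k > 2 * t) (a b : ℂ) (φ : ℂ → ℂ) (hφ : φ = fun z => a * z ^ p * (starRingEnd ℂ z) ^ n + b * z ^ s * (starRingEnd ℂ z) ^ t) :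
    fsPair m (fsToeplitz m φ (fsToeplitz m φ (fun w => w ^ k)))
        (fsToeplitz m φ (fun w => w ^ k)) = 0 ∧
    fsPair m (fsToeplitz m (fun w => starRingEnd ℂ (φ w)) (fsToeplitz m φ (fun w => w ^ k)))
        (fsToeplitz m (fun w => starRingEnd ℂ (φ w)) (fun w => w ^ k)) = 0 ∧
    fsPair m (fsToeplitz m φ (fsToeplitz m φ (fun w => w ^ k)))
        (fsToeplitz m φ (fun w => w ^ k)) =
      fsPair m (fsToeplitz m (fun w => starRingEnd ℂ (φ w)) (fsToeplitz m φ (fun w => w ^ k)))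
        (fsToeplitz m (fun w => starRingEnd ℂ (φ w)) (fun w => w ^ k)) := by
  obtain ⟨d, rfl⟩ := Nat.exists_eq_add_of_lt hn
  obtain ⟨e, rfl⟩ := Nat.exists_eq_add_of_lt hs
  -- here `d + 1` and `e + 1` are the differences `p - n` and `t - s`
  obtain ⟨ω, hprim⟩ : ∃ ω : ℂ, IsPrimitiveRoot ω (d + 1 + (e + 1)) :=
    ⟨_, Complex.isPrimitiveRoot_exp _ (by omega)⟩
  have hω : ‖ω‖ = 1 := hprim.norm'_eq_one (by omega)
  have hc := mul_conj_of_norm_one ω hω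
  set c := starRingEnd ℂ ω with hcdef
  have hpow (j : ℕ) : ω ^ j * c ^ j = 1 := by rw [← mul_pow, hc, one_pow]
  have hne : ω ^ (d + 1) ≠ 1 := hprim.pow_ne_one_of_pos_of_lt (by omega) (by omega)
  have hce : c ^ (e + 1) = ω ^ (d + 1) := by
    have h1 : ω ^ (d + 1) * ω ^ (e + 1) = 1 := by rw [← pow_add, hprim.pow_eq_one]
    linear_combination ω ^ (d + 1) * hpow (e + 1) - c ^ (e + 1) * h1
  have hrot (z : ℂ) : φ (ω * z) = ω ^ (d + 1) * φ z := by
    subst hφ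
    simp only [map_mul, mul_pow, ← hcdef]
    have h1 : ω ^ (n + d + 1) * c ^ n = ω ^ (d + 1) := by
      rw [add_assoc, pow_add]
      linear_combination ω ^ (d + 1) * hpow n
    have h2 : ω ^ s * c ^ (s + e + 1) = ω ^ (d + 1) := by
      rw [add_assoc, pow_add, ← hce]
      linear_combination c ^ (e + 1) * hpow s
    linear_combination a * z ^ (n + d + 1) * starRingEnd ℂ z ^ n * h1
      + b * z ^ s * starRingEnd ℂ z ^ (s + e + 1) * h2
  have hrot' (z : ℂ) : starRingEnd ℂ (φ (ω * z)) = c ^ (d + 1) * starRingEnd ℂ (φ z) := by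
    rw [hrot, map_mul, map_pow]
  have hmon (z : ℂ) : (fun w : ℂ => w ^ k) (ω * z) = ω ^ k * (fun w : ℂ => w ^ k) z :=
    mul_pow _ _ _
  have hT := fsToeplitz_rotate m ω hω hrot hmon
  have hT' := fsToeplitz_rotate m ω hω (ψ := fun w => starRingEnd ℂ (φ w)) hrot' hmon
  have zero_of_eq {x y : ℂ} (hy : y = ω ^ (d + 1)) (hx : x = y * x) : x = 0 := by
    subst hy
    exact (mul_eq_zero.mp (by linear_combination -hx : (ω ^ (d + 1) - 1) * x = 0)).resolve_left
      (sub_ne_zero.mpr hne)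
  have A := zero_of_eq (by
    simp only [map_mul, map_pow, ← hcdef]
    linear_combination ω ^ (d + 1) * ω ^ k * c ^ k * hpow (d + 1) + ω ^ (d + 1) * hpow k)
    (fsPair_rotate m ω hω (fsToeplitz_rotate m ω hω hrot hT) hT)
  have B := zero_of_eq (by
    simp only [map_mul, map_pow, hcdef, Complex.conj_conj]
    simp only [← hcdef]
    linear_combination ω ^ (d + 1) * ω ^ k * c ^ k * hpow (d + 1) + ω ^ (d + 1) * hpow k)
    (fsPair_rotate m ω hω
      (fsToeplitz_rotate m ω hω (ψ := fun w => starRingEnd ℂ (φ w)) hrot' hT) hT')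
  exact ⟨A, B, A.trans B.symm⟩
end

section
/- Let m = 1 and let φ(z) = 2·z³ + 2·z³·conj(z) + conj(z)³ + 3·z·conj(z)³. Then ⟨T_φ(T_φ (w ↦ w)), T_φ (w ↦ w)⟩ = 0, ⟨T_{conj∘φ}(T_φ (w ↦ w)), T_{conj∘φ} (w ↦ w)⟩ = 0, and ‖T_φ (w ↦ w)‖² − ‖T_{conj∘φ} (w ↦ w)‖² = −2640·π; in particular the quasinormality test ⟨T_φ(T_φ (w ↦ w)), T_φ (w ↦ w)⟩ = ⟨T_{conj∘φ}(T_φ (w ↦ w)), T_{conj∘φ} (w ↦ w)⟩ holds at the monomial z while the hyponormality test ‖T_φ (w ↦ w)‖² ≥ ‖T_{conj∘φ} (w ↦ w)‖² fails. -/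
/-!
For `m = 1` the weight is rotation invariant, so the moments `∫ w ^ a * conj w ^ b` against it vanish
for `a ≠ b` and equal `π (a + 1)!` for `a = b` (`integral_moment`). Expanding the reproducing kernel
and integrating term by term (dominated convergence, with dominating sum
`|w| ^ n * exp (|z| |w| - |w|²)`) shows that the Toeplitz operator with symbol `w ^ a * conj w ^ b`
sends `1` to `(a + 1)! / (a - b + 1)! * z ^ (a - b)` if `b ≤ a`, and to `0` otherwise
(`integral_toepMono`). By linearity, `T_φ z = 10 z³ + 2 z⁴` and `T_{conj φ} z = 15 z³ + z⁴`, while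
`T_φ (T_φ z)` and `T_{conj φ} (T_φ z)` only involve the degrees `0, 1, 2, 5, 6, 7`. Hence both
pairings vanish, and the norms are `2880 π` and `5520 π`.
-/


open MeasureTheory Complex ComplexOrder

/-- The monomial `w ^ a * conj w ^ b`. -/
noncomputable def mono (a b : ℕ) (w : ℂ) : ℂ := w ^ a * (starRingEnd ℂ w) ^ b

/-- The moment `∫ w ^ a * conj w ^ b` against the weight of index `1`. -/
noncomputable def moment (a b : ℕ) : ℂ :=
  if a = b then (Real.pi : ℂ) * ((a + 1).factorial : ℂ) else 0

/-- The polynomial `T_ψ 1` for `ψ = w ^ a * conj w ^ b` and index `1`. -/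
noncomputable def toepMono (a b : ℕ) (z : ℂ) : ℂ :=
  if b ≤ a then ((a + 1).factorial : ℂ) / ((a - b + 1).factorial : ℂ) * z ^ (a - b) else 0

lemma integral_norm_pow_mul_gauss (n : ℕ) (c : ℝ) (hc : 0 < c) :
    ∫ w : ℂ, ‖w‖ ^ n * Real.exp (-c * ‖w‖ ^ 2)
      = Real.pi * c ^ (-((n : ℝ) + 2) / 2) * Real.Gamma (((n : ℝ) + 2) / 2) := by
  have h := Complex.integral_rpow_mul_exp_neg_mul_rpow (p := 2) (q := n) (b := c)
    (by norm_num) (by have : (0 : ℝ) ≤ n := n.cast_nonneg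
                      linarith) hc
  have h2 : ∀ x : ℝ, x ^ (2 : ℝ) = x ^ 2 := fun x => by
    exact_mod_cast Real.rpow_natCast x 2
  simp only [Real.rpow_natCast, h2] at h
  rw [h]; ring

lemma integrable_norm_pow_mul_gauss (n : ℕ) (c : ℝ) (hc : 0 < c) :
    Integrable fun w : ℂ => ‖w‖ ^ n * Real.exp (-c * ‖w‖ ^ 2) := by
  -- a non-integrable function has Bochner integral zero, but this one is positive
  refine not_imp_comm.1 integral_undef ?_
  rw [integral_norm_pow_mul_gauss n c hc]
  have : 0 < Real.Gamma (((n : ℝ) + 2) / 2) := Real.Gamma_pos_of_pos (by positivity)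
  have := Real.pi_pos
  positivity

lemma continuous_mono (a b : ℕ) : Continuous (mono a b) := by
  unfold mono
  fun_prop

lemma norm_mono (a b : ℕ) (w : ℂ) : ‖mono a b w‖ = ‖w‖ ^ (a + b) := by
  simp [mono, pow_add]

lemma norm_fsWt_one (w : ℂ) : ‖fsWt 1 w‖ = ‖w‖ ^ 2 * Real.exp (-‖w‖ ^ 2) := by
  simp only [fsWt, norm_mul, norm_pow, Complex.norm_real, Real.norm_eq_abs, abs_norm, mul_one,
    Real.abs_exp]

lemma integrable_moment (a b : ℕ) : Integrable fun w => mono a b w * fsWt 1 w := by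
  refine (integrable_norm_pow_mul_gauss (a + b + 2) 1 one_pos).mono'
    ((continuous_mono a b).mul (continuous_fsWt 1)).aestronglyMeasurable (.of_forall fun w => ?_)
  rw [norm_mul, norm_mono, norm_fsWt_one, pow_add _ (a + b)]
  simp [mul_assoc]

/-- Off the diagonal the moment vanishes by rotation invariance: rotating by
`exp (iπ / (a - b))` changes the sign of the integrand. -/
lemma integral_moment (a b : ℕ) : ∫ w, mono a b w * fsWt 1 w = moment a b := by
  unfold moment
  split_ifs with hab
  · subst hab
    have h : ∀ w : ℂ, mono a a w * fsWt 1 w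
        = ((‖w‖ ^ (2 * a + 2) * Real.exp (-1 * ‖w‖ ^ 2) : ℝ) : ℂ) := fun w => by
      have : mono a a w = ((‖w‖ : ℝ) : ℂ) ^ (2 * a) := by
        rw [mono, ← mul_pow, Complex.mul_conj, Complex.normSq_eq_norm_sq, pow_mul]
        push_cast; rfl
      rw [this, fsWt]
      push_cast
      ring_nf
    simp_rw [h]
    rw [integral_complex_ofReal, integral_norm_pow_mul_gauss _ _ one_pos]
    have : (((2 * a + 2 : ℕ) : ℝ) + 2) / 2 = ((a + 1 : ℕ) : ℝ) + 1 := by push_cast; ring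
    rw [this, Real.Gamma_nat_eq_factorial, Real.one_rpow]
    push_cast; ring
  · have hne : (a : ℂ) - b ≠ 0 := sub_ne_zero.2 (by exact_mod_cast hab)
    set t : ℝ := Real.pi / ((a : ℝ) - b) with ht
    have key : ∀ w : ℂ, mono a b (rotation (Circle.exp t) w) * fsWt 1 (rotation (Circle.exp t) w)
        = -(mono a b w * fsWt 1 w) := fun w => by
      have hwt : fsWt 1 (rotation (Circle.exp t) w) = fsWt 1 w := by
        simp [fsWt]
      have hc : Complex.exp (t * I) ^ a * (starRingEnd ℂ (Complex.exp (t * I))) ^ b = -1 := by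
        rw [← Complex.exp_conj, ← Complex.exp_nat_mul, ← Complex.exp_nat_mul, ← Complex.exp_add,
          ← Complex.exp_pi_mul_I]
        congr 1
        simp only [map_mul, Complex.conj_ofReal, Complex.conj_I, ht]
        push_cast
        field_simp
        ring
      rw [hwt]
      simp only [mono, rotation_apply, Circle.coe_exp, map_mul, mul_pow]
      linear_combination (w ^ a * (starRingEnd ℂ w) ^ b * fsWt 1 w) * hc
    have hinv := (rotation (Circle.exp t)).measurePreserving.integral_comp
      (rotation (Circle.exp t)).toHomeomorph.measurableEmbedding
      (fun w => mono a b w * fsWt 1 w)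
    simp_rw [key, integral_neg] at hinv
    linear_combination (-1 / 2 : ℂ) * hinv

/-- The `j`-th term of the integrand of the Toeplitz operator, with the kernel expanded. -/
noncomputable def kerTerm (a b : ℕ) (z : ℂ) (j : ℕ) (w : ℂ) : ℂ :=
  z ^ j / ((j + 1).factorial : ℂ) * (mono a (b + j) w * fsWt 1 w)

/-- A dominating function for `kerTerm`. -/
noncomputable def kerBound (a b : ℕ) (z : ℂ) (j : ℕ) (w : ℂ) : ℝ :=
  (‖w‖ ^ (a + b + 2) * Real.exp (-‖w‖ ^ 2)) * ((‖z‖ * ‖w‖) ^ j / (j.factorial : ℝ))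

lemma norm_kerTerm_le (a b : ℕ) (z : ℂ) (j : ℕ) (w : ℂ) :
    ‖kerTerm a b z j w‖ ≤ kerBound a b z j w := by
  have h1 : ‖kerTerm a b z j w‖ = (‖w‖ ^ (a + b + 2) * Real.exp (-‖w‖ ^ 2))
      * ((‖z‖ * ‖w‖) ^ j / ((j + 1).factorial : ℝ)) := by
    simp only [kerTerm, norm_mul, norm_mono, norm_fsWt_one, norm_div, norm_pow, RCLike.norm_natCast]
    ring
  rw [h1, kerBound]
  gcongr
  exact Nat.le_succ j

lemma hasSum_kerBound (a b : ℕ) (z w : ℂ) :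
    HasSum (fun j => kerBound a b z j w)
      ((‖w‖ ^ (a + b + 2) * Real.exp (-‖w‖ ^ 2)) * Real.exp (‖z‖ * ‖w‖)) := by
  refine HasSum.mul_left _ ?_
  rw [Real.exp_eq_exp_ℝ]
  exact NormedSpace.expSeries_div_hasSum_exp (‖z‖ * ‖w‖)

lemma integrable_kerBound_sum (a b : ℕ) (z : ℂ) :
    Integrable fun w : ℂ =>
      (‖w‖ ^ (a + b + 2) * Real.exp (-‖w‖ ^ 2)) * Real.exp (‖z‖ * ‖w‖) := by
  refine ((integrable_norm_pow_mul_gauss (a + b + 2) (1 / 2) (by norm_num)).const_mul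
    (Real.exp (‖z‖ ^ 2 / 2))).mono' (by fun_prop) (.of_forall fun w => ?_)
  rw [Real.norm_of_nonneg (by positivity)]
  have : Real.exp (-‖w‖ ^ 2) * Real.exp (‖z‖ * ‖w‖)
      ≤ Real.exp (‖z‖ ^ 2 / 2) * Real.exp (-(1 / 2) * ‖w‖ ^ 2) := by
    rw [← Real.exp_add, ← Real.exp_add]
    -- completing the square: `|z||w| ≤ |z|² / 2 + |w|² / 2`
    exact Real.exp_le_exp.2 (by nlinarith [sq_nonneg (‖z‖ - ‖w‖)])
  calc _ = ‖w‖ ^ (a + b + 2) * (Real.exp (-‖w‖ ^ 2) * Real.exp (‖z‖ * ‖w‖)) := by ring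
    _ ≤ ‖w‖ ^ (a + b + 2) * (Real.exp (‖z‖ ^ 2 / 2) * Real.exp (-(1 / 2) * ‖w‖ ^ 2)) := by gcongr
    _ = _ := by ring

lemma continuous_kerTerm (a b : ℕ) (z : ℂ) (j : ℕ) : Continuous (kerTerm a b z j) :=
  continuous_const.mul ((continuous_mono _ _).mul (continuous_fsWt 1))

lemma hasSum_kerTerm (a b : ℕ) (z w : ℂ) :
    HasSum (fun j => kerTerm a b z j w) (mono a b w * fsKernel 1 z w * fsWt 1 w) := by
  have hs : Summable fun j => kerTerm a b z j w :=
    .of_norm_bounded (hasSum_kerBound a b z w).summable fun j => norm_kerTerm_le a b z j w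
  convert hs.hasSum using 1
  rw [fsKernel, ← tsum_mul_left, ← tsum_mul_right]
  refine tsum_congr fun j => ?_
  simp only [kerTerm, mono, Nat.factorial_one, Nat.cast_one, mul_pow, pow_add]
  ring

lemma integrable_toepMono (a b : ℕ) (z : ℂ) :
    Integrable fun w => mono a b w * fsKernel 1 z w * fsWt 1 w := by
  refine (integrable_kerBound_sum a b z).mono' ?_ (.of_forall fun w => ?_)
  · have hm : Measurable fun w => ∑' j, kerTerm a b z j w := by
      refine measurable_of_tendsto_metrizable (f := fun n w => ∑ j ∈ Finset.range n, kerTerm a b z j w)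
        (fun n => Finset.measurable_sum _ fun j _ => (continuous_kerTerm a b z j).measurable) ?_
      rw [tendsto_pi_nhds]
      exact fun w => (hasSum_kerTerm a b z w).summable.hasSum.tendsto_sum_nat
    refine hm.aestronglyMeasurable.congr (.of_forall fun w => ?_)
    exact (hasSum_kerTerm a b z w).tsum_eq
  · rw [← (hasSum_kerTerm a b z w).tsum_eq]
    exact tsum_of_norm_bounded (hasSum_kerBound a b z w) fun j => norm_kerTerm_le a b z j w

/-- Integrating the kernel expansion term by term leaves only the term `j = a - b`. -/
lemma integral_toepMono (a b : ℕ) (z : ℂ) :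
    ∫ w, mono a b w * fsKernel 1 z w * fsWt 1 w = Real.pi * toepMono a b z := by
  have h := hasSum_integral_of_dominated_convergence (μ := volume) (kerBound a b z)
    (fun j => (continuous_kerTerm a b z j).aestronglyMeasurable)
    (fun j => .of_forall fun w => norm_kerTerm_le a b z j w)
    (.of_forall fun w => (hasSum_kerBound a b z w).summable)
    (by simpa only [(hasSum_kerBound a b z _).tsum_eq] using integrable_kerBound_sum a b z)
    (.of_forall fun w => hasSum_kerTerm a b z w)
  have hj : ∀ j, ∫ w, kerTerm a b z j w
      = z ^ j / ((j + 1).factorial : ℂ) * moment a (b + j) := fun j => by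
    simp only [kerTerm]
    rw [integral_const_mul, integral_moment]
  simp_rw [hj] at h
  refine h.unique ?_
  unfold toepMono
  split_ifs with hba
  · convert hasSum_single (a - b) fun j hjne => ?_ using 1
    · rw [moment, if_pos (by omega)]
      ring
    · rw [moment, if_neg (by omega), mul_zero]
  · convert hasSum_zero using 2 with j
    · rw [moment, if_neg (by omega), mul_zero]
    · rw [mul_zero]

lemma fsToeplitz_eq {n : ℕ} (c : Fin n → ℂ) (a b : Fin n → ℕ) (ψ f : ℂ → ℂ)
    (h : ∀ w, ψ w * f w = ∑ i, c i * mono (a i) (b i) w) (z : ℂ) :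
    fsToeplitz 1 ψ f z = ∑ i, c i * toepMono (a i) (b i) z := by
  have hI : ∫ w, ψ w * f w * fsKernel 1 z w * fsWt 1 w
      = ∑ i, c i * (Real.pi * toepMono (a i) (b i) z) := by
    simp_rw [h, Finset.sum_mul, mul_assoc (c _), ← integral_toepMono, ← integral_const_mul]
    exact integral_finsetSum _ fun i _ => (integrable_toepMono (a i) (b i) z).const_mul (c i)
  rw [fsToeplitz, hI, Finset.mul_sum]
  refine Finset.sum_congr rfl fun i _ => ?_
  have : (Real.pi : ℂ) ≠ 0 := by exact_mod_cast Real.pi_ne_zero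
  simp only [Nat.factorial_one, Nat.cast_one]
  field_simp

lemma fsPair_eq {n : ℕ} (c : Fin n → ℂ) (a b : Fin n → ℕ) (g h : ℂ → ℂ)
    (hgh : ∀ w, g w * starRingEnd ℂ (h w) = ∑ i, c i * mono (a i) (b i) w) :
    fsPair 1 g h = ∑ i, c i * moment (a i) (b i) := by
  simp_rw [fsPair, hgh, Finset.sum_mul, mul_assoc (c _), ← integral_moment, ← integral_const_mul]
  exact integral_finsetSum _ fun i _ => (integrable_moment (a i) (b i)).const_mul (c i)

theorem stmt19 (φ : ℂ → ℂ)
    (hφ : φ = fun z => 2 * z ^ 3 + 2 * z ^ 3 * starRingEnd ℂ z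
      + (starRingEnd ℂ z) ^ 3 + 3 * z * (starRingEnd ℂ z) ^ 3) :
    fsPair 1 (fsToeplitz 1 φ (fsToeplitz 1 φ (fun w => w)))
        (fsToeplitz 1 φ (fun w => w)) = 0 ∧
    fsPair 1 (fsToeplitz 1 (fun w => starRingEnd ℂ (φ w)) (fsToeplitz 1 φ (fun w => w)))
        (fsToeplitz 1 (fun w => starRingEnd ℂ (φ w)) (fun w => w)) = 0 ∧
    fsNormSq 1 (fsToeplitz 1 φ (fun w => w))
        - fsNormSq 1 (fsToeplitz 1 (fun w => starRingEnd ℂ (φ w)) (fun w => w)) =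
      ((-2640 * Real.pi : ℝ) : ℂ) ∧
    (fsPair 1 (fsToeplitz 1 φ (fsToeplitz 1 φ (fun w => w)))
        (fsToeplitz 1 φ (fun w => w)) =
      fsPair 1 (fsToeplitz 1 (fun w => starRingEnd ℂ (φ w)) (fsToeplitz 1 φ (fun w => w)))
        (fsToeplitz 1 (fun w => starRingEnd ℂ (φ w)) (fun w => w))) ∧
    ¬ (fsNormSq 1 (fsToeplitz 1 φ (fun w => w))
        ≥ fsNormSq 1 (fsToeplitz 1 (fun w => starRingEnd ℂ (φ w)) (fun w => w))) := by
  have hT : fsToeplitz 1 φ (fun w => w) = fun z => 10 * z ^ 3 + 2 * z ^ 4 := by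
    funext z
    rw [fsToeplitz_eq ![2, 2, 1, 3] ![4, 4, 1, 2] ![0, 1, 3, 3]]
    · simp [Fin.sum_univ_succ, toepMono, Nat.factorial]
      ring
    · intro w
      simp [Fin.sum_univ_succ, mono, hφ]
      ring
  have hS : fsToeplitz 1 (fun w => starRingEnd ℂ (φ w)) (fun w => w)
      = fun z => 15 * z ^ 3 + z ^ 4 := by
    funext z
    rw [fsToeplitz_eq ![2, 2, 1, 3] ![1, 2, 4, 4] ![3, 3, 0, 1]]
    · simp [Fin.sum_univ_succ, toepMono, Nat.factorial]
      ring
    · intro w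
      simp [Fin.sum_univ_succ, mono, hφ, map_ofNat]
      ring
  have hTT : fsToeplitz 1 φ (fun z => 10 * z ^ 3 + 2 * z ^ 4) = fun z =>
      240 + 1920 * z + 720 * z ^ 2 + 140 * z ^ 5 + 52 * z ^ 6 + 4 * z ^ 7 := by
    funext z
    rw [fsToeplitz_eq ![20, 20, 10, 30, 4, 4, 2, 6] ![6, 6, 3, 4, 7, 7, 4, 5]
      ![0, 1, 3, 3, 0, 1, 3, 3]]
    · simp [Fin.sum_univ_succ, toepMono, Nat.factorial]
      ring
    · intro w
      simp [Fin.sum_univ_succ, mono, hφ]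
      ring
  have hST : fsToeplitz 1 (fun w => starRingEnd ℂ (φ w)) (fun z => 10 * z ^ 3 + 2 * z ^ 4) =
      fun z => 480 + 1440 * z + 480 * z ^ 2 + 210 * z ^ 5 + 58 * z ^ 6 + 2 * z ^ 7 := by
    funext z
    rw [fsToeplitz_eq ![20, 20, 10, 30, 4, 4, 2, 6] ![3, 4, 6, 6, 4, 5, 7, 7]
      ![3, 3, 0, 1, 3, 3, 0, 1]]
    · simp [Fin.sum_univ_succ, toepMono, Nat.factorial]
      ring
    · intro w
      simp [Fin.sum_univ_succ, mono, hφ, map_ofNat]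
      ring
  -- orthogonality: the degrees `0, 1, 2, 5, 6, 7` never meet the degrees `3, 4`
  have horth : ∀ c₀ c₁ c₂ c₅ c₆ c₇ d₃ d₄ : ℂ, fsPair 1
      (fun z => c₀ + c₁ * z + c₂ * z ^ 2 + c₅ * z ^ 5 + c₆ * z ^ 6 + c₇ * z ^ 7)
      (fun z => d₃ * z ^ 3 + d₄ * z ^ 4) = 0 := by
    intro c₀ c₁ c₂ c₅ c₆ c₇ d₃ d₄
    rw [fsPair_eq
      ![c₀ * starRingEnd ℂ d₃, c₁ * starRingEnd ℂ d₃, c₂ * starRingEnd ℂ d₃,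
        c₅ * starRingEnd ℂ d₃, c₆ * starRingEnd ℂ d₃, c₇ * starRingEnd ℂ d₃,
        c₀ * starRingEnd ℂ d₄, c₁ * starRingEnd ℂ d₄, c₂ * starRingEnd ℂ d₄,
        c₅ * starRingEnd ℂ d₄, c₆ * starRingEnd ℂ d₄, c₇ * starRingEnd ℂ d₄]
      ![0, 1, 2, 5, 6, 7, 0, 1, 2, 5, 6, 7] ![3, 3, 3, 3, 3, 3, 4, 4, 4, 4, 4, 4]]
    · simp [Fin.sum_univ_succ, moment]
    · intro w
      simp [Fin.sum_univ_succ, mono]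
      ring
  have hnorm : ∀ d₃ d₄ : ℝ, fsNormSq 1 (fun z => (d₃ : ℂ) * z ^ 3 + d₄ * z ^ 4)
      = Real.pi * (24 * d₃ ^ 2 + 120 * d₄ ^ 2) := by
    intro d₃ d₄
    rw [fsNormSq, fsPair_eq ![(d₃ : ℂ) * d₃, d₃ * d₄, d₄ * d₃, d₄ * d₄] ![3, 3, 4, 4] ![3, 4, 3, 4]]
    · simp [Fin.sum_univ_succ, moment, Nat.factorial]
      ring
    · intro w
      simp [Fin.sum_univ_succ, mono]
      ring
  have h1 : fsPair 1 (fsToeplitz 1 φ (fsToeplitz 1 φ (fun w => w)))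
      (fsToeplitz 1 φ (fun w => w)) = 0 := by
    rw [hT, hTT]
    exact horth _ _ _ _ _ _ _ _
  have h2 : fsPair 1 (fsToeplitz 1 (fun w => starRingEnd ℂ (φ w)) (fsToeplitz 1 φ (fun w => w)))
      (fsToeplitz 1 (fun w => starRingEnd ℂ (φ w)) (fun w => w)) = 0 := by
    rw [hT, hST, hS]
    simpa only [one_mul] using horth 480 1440 480 210 58 2 15 1
  have h3 : fsNormSq 1 (fsToeplitz 1 φ (fun w => w))
      - fsNormSq 1 (fsToeplitz 1 (fun w => starRingEnd ℂ (φ w)) (fun w => w)) =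
      ((-2640 * Real.pi : ℝ) : ℂ) := by
    have e1 := hnorm 10 2
    have e2 := hnorm 15 1
    push_cast at e1 e2
    simp only [one_mul] at e2
    rw [hT, hS, e1, e2]
    push_cast
    ring
  refine ⟨h1, h2, h3, h1.trans h2.symm, fun hge => ?_⟩
  have h4 := sub_nonneg.2 hge
  rw [h3, Complex.zero_le_real] at h4
  linarith [Real.pi_pos]
end
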